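/- Let B ∈ ℝ^{m×n} be any real matrix, and let A ∈ ℝ^{(m+3n)×3n} be the block matrix whose blocks, from top to bottom, are [⅓B ⅓B ⅓B], [I_n I_n −I_n], [I_n −I_n I_n], and [−I_n I_n I_n]. If x ∈ {0,1}^{3n} satisfies ‖A((1/2)·1 − x)‖_∞ < 3/2, where x is the concatenation of x¹, x², x³ ∈ {0,1}ⁿ, then x¹ = x² = x³ and ‖B((1/2)·1 − x¹)‖_∞ < 3/2. -/

import Mathlib

/-- The block matrix `A` with row blocks `[⅓B ⅓B ⅓B]`, `[I I -I]`, `[I -I I]`, `[-I I I]`. -/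
noncomputable def Amat {m n : ℕ} (B : Matrix (Fin m) (Fin n) ℝ) :
    Matrix (Fin m ⊕ (Fin n ⊕ Fin n ⊕ Fin n)) (Fin n ⊕ Fin n ⊕ Fin n) ℝ :=
  Matrix.of fun r c =>
    match r with
    | Sum.inl j => (1 / 3) * B j (Sum.elim id (Sum.elim id id) c)
    | Sum.inr (Sum.inl k) =>
        Sum.elim (fun i => if k = i then (1 : ℝ) else 0)
          (Sum.elim (fun i => if k = i then (1 : ℝ) else 0)
            (fun i => if k = i then (-1 : ℝ) else 0)) c
    | Sum.inr (Sum.inr (Sum.inl k)) =>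
        Sum.elim (fun i => if k = i then (1 : ℝ) else 0)
          (Sum.elim (fun i => if k = i then (-1 : ℝ) else 0)
            (fun i => if k = i then (1 : ℝ) else 0)) c
    | Sum.inr (Sum.inr (Sum.inr k)) =>
        Sum.elim (fun i => if k = i then (-1 : ℝ) else 0)
          (Sum.elim (fun i => if k = i then (1 : ℝ) else 0)
            (fun i => if k = i then (1 : ℝ) else 0)) c

/-- Soundness step: a `0-1` vector `x = (x¹,x²,x³)` with `‖A((1/2)·1 - x)‖_∞ < 3/2`
must have `x¹ = x² = x³` and `‖B((1/2)·1 - x¹)‖_∞ < 3/2`. -/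
theorem reduction_soundness_step {m n : ℕ} (B : Matrix (Fin m) (Fin n) ℝ)
    (x1 x2 x3 : Fin n → ℝ)
    (hx : ∀ i, (x1 i = 0 ∨ x1 i = 1) ∧ (x2 i = 0 ∨ x2 i = 1) ∧ (x3 i = 0 ∨ x3 i = 1))
    (h : ‖(Amat B).mulVec
        ((fun _ => (1 : ℝ) / 2) - Sum.elim x1 (Sum.elim x2 x3))‖ < 3 / 2) :
    x1 = x2 ∧ x2 = x3 ∧ ‖B.mulVec ((fun _ => (1 : ℝ) / 2) - x1)‖ < 3 / 2 := by
  rw [pi_norm_lt_iff (by norm_num)] at h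
  have key : ∀ i, x1 i = x2 i ∧ x2 i = x3 i := by
    intro i
    have h1 := h (Sum.inr (Sum.inl i))
    have h2 := h (Sum.inr (Sum.inr (Sum.inl i)))
    have h3 := h (Sum.inr (Sum.inr (Sum.inr i)))
    simp only [Matrix.mulVec, dotProduct, Amat, Matrix.of_apply, Fintype.sum_sum_type,
      Sum.elim_inl, Sum.elim_inr, Pi.sub_apply, ite_mul, zero_mul, Finset.sum_ite_eq,
      Finset.mem_univ, if_true, Real.norm_eq_abs, abs_lt] at h1 h2 h3
    obtain ⟨a, b, c⟩ := hx i
    rcases a with a | a <;> rcases b with b | b <;> rcases c with c | c <;>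
      rw [a, b, c] at h1 h2 h3 <;> rw [a, b, c] <;>
      first | (norm_num; done) | (exfalso; linarith [h1.1, h1.2, h2.1, h2.2, h3.1, h3.2])
  have e1 : x1 = x2 := funext fun i => (key i).1
  have e2 : x2 = x3 := funext fun i => (key i).2
  refine ⟨e1, e2, ?_⟩
  subst e1
  subst e2
  rw [pi_norm_lt_iff (by norm_num)]
  intro j
  have hj := h (Sum.inl j)
  have e : (Amat B).mulVec ((fun _ => (1 : ℝ) / 2) - Sum.elim x1 (Sum.elim x1 x1)) (Sum.inl j)
      = B.mulVec ((fun _ => (1 : ℝ) / 2) - x1) j := by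
    simp only [Matrix.mulVec, dotProduct, Amat, Matrix.of_apply, Fintype.sum_sum_type,
      Sum.elim_inl, Sum.elim_inr, Pi.sub_apply, id, mul_assoc, ← Finset.mul_sum]
    ring
  rwa [e] at hj
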